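/- arXiv:2211.03904 — 2 statements merged into one kernel-verified Lean document; each statement's English description precedes it below -/
import Mathlib

section
/- Energy conservation law for the potential Kawahara–KP equation: if v solves the potential Kawahara–KP equation, then ∂_t T + ∂_x Φˣ + ∂_y Φʸ = 0 holds at every point of ℝ³, where T := (1/2)·(v_xxx² - β·v_xx² + (1/3)·v_x³ - σ·v_y²), Φˣ := (β·v_xx + v_xxxx)·v_tx - (1/2)·v_t² - (β·v_xxx + v_xxxxx + (1/2)·v_x²)·v_t - v_txx·v_xxx, and Φʸ := σ·v_t·v_y, all regarded as functions of (t,x,y) by composing the partial derivatives of v. -/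
/-- Partial derivative in `t` of a function `v (t, x, y)` given in curried form. -/
noncomputable def pt (v : ℝ → ℝ → ℝ → ℝ) : ℝ → ℝ → ℝ → ℝ :=
  fun t x y => deriv (fun s => v s x y) t

/-- Partial derivative in `x` of a function `v (t, x, y)` given in curried form. -/
noncomputable def px (v : ℝ → ℝ → ℝ → ℝ) : ℝ → ℝ → ℝ → ℝ :=
  fun t x y => deriv (fun s => v t s y) x

/-- Partial derivative in `y` of a function `v (t, x, y)` given in curried form. -/
noncomputable def py (v : ℝ → ℝ → ℝ → ℝ) : ℝ → ℝ → ℝ → ℝ :=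
  fun t x y => deriv (fun s => v t x s) y

/-- The potential Kawahara–KP operator:
`v_tx + v_x·v_xx + β·v_xxxx + v_xxxxxx - σ·v_yy`. -/
noncomputable def KKP (β σ : ℝ) (v : ℝ → ℝ → ℝ → ℝ) : ℝ → ℝ → ℝ → ℝ :=
  fun t x y =>
    px (pt v) t x y + px v t x y * px (px v) t x y
      + β * px (px (px (px v))) t x y
      + px (px (px (px (px (px v))))) t x y
      - σ * py (py v) t x y

/-- The linearization of the potential Kawahara–KP equation at `v`, applied to `p`:
`p_tx + v_xx·p_x + v_x·p_xx + β·p_xxxx + p_xxxxxx - σ·p_yy`. -/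
noncomputable def KKPlin (β σ : ℝ) (v p : ℝ → ℝ → ℝ → ℝ) : ℝ → ℝ → ℝ → ℝ :=
  fun t x y =>
    px (pt p) t x y + px (px v) t x y * px p t x y + px v t x y * px (px p) t x y
      + β * px (px (px (px p))) t x y
      + px (px (px (px (px (px p))))) t x y
      - σ * py (py p) t x y

def SmF (f : ℝ → ℝ → ℝ → ℝ) : Prop :=
  ContDiff ℝ (⊤ : ℕ∞) (fun q : ℝ × ℝ × ℝ => f q.1 q.2.1 q.2.2)

theorem SmF.fd {f : ℝ → ℝ → ℝ → ℝ} (h : SmF f) (q : ℝ × ℝ × ℝ) :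
    HasFDerivAt (fun q : ℝ × ℝ × ℝ => f q.1 q.2.1 q.2.2)
      (fderiv ℝ (fun q : ℝ × ℝ × ℝ => f q.1 q.2.1 q.2.2) q) q :=
  ((ContDiff.differentiable h (by simp)) q).hasFDerivAt

theorem SmF.dt0 {f : ℝ → ℝ → ℝ → ℝ} (h : SmF f) (t x y : ℝ) :
    HasDerivAt (fun s => f s x y)
      (fderiv ℝ (fun q : ℝ × ℝ × ℝ => f q.1 q.2.1 q.2.2) (t, x, y) (1, 0, 0)) t :=
  HasFDerivAt.comp_hasDerivAt (f := fun s : ℝ => ((s, x, y) : ℝ × ℝ × ℝ)) t (h.fd (t, x, y))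
    ((hasDerivAt_id t).prodMk ((hasDerivAt_const t x).prodMk (hasDerivAt_const t y)))

theorem SmF.dx0 {f : ℝ → ℝ → ℝ → ℝ} (h : SmF f) (t x y : ℝ) :
    HasDerivAt (fun s => f t s y)
      (fderiv ℝ (fun q : ℝ × ℝ × ℝ => f q.1 q.2.1 q.2.2) (t, x, y) (0, 1, 0)) x :=
  HasFDerivAt.comp_hasDerivAt (f := fun s : ℝ => ((t, s, y) : ℝ × ℝ × ℝ)) x (h.fd (t, x, y))
    ((hasDerivAt_const x t).prodMk ((hasDerivAt_id x).prodMk (hasDerivAt_const x y)))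

theorem SmF.dy0 {f : ℝ → ℝ → ℝ → ℝ} (h : SmF f) (t x y : ℝ) :
    HasDerivAt (fun s => f t x s)
      (fderiv ℝ (fun q : ℝ × ℝ × ℝ => f q.1 q.2.1 q.2.2) (t, x, y) (0, 0, 1)) y :=
  HasFDerivAt.comp_hasDerivAt (f := fun s : ℝ => ((t, x, s) : ℝ × ℝ × ℝ)) y (h.fd (t, x, y))
    ((hasDerivAt_const y t).prodMk ((hasDerivAt_const y x).prodMk (hasDerivAt_id y)))

theorem SmF.dt {f : ℝ → ℝ → ℝ → ℝ} (h : SmF f) (t x y : ℝ) :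
    HasDerivAt (fun s => f s x y) (pt f t x y) t :=
  (h.dt0 t x y).differentiableAt.hasDerivAt

theorem SmF.dx {f : ℝ → ℝ → ℝ → ℝ} (h : SmF f) (t x y : ℝ) :
    HasDerivAt (fun s => f t s y) (px f t x y) x :=
  (h.dx0 t x y).differentiableAt.hasDerivAt

theorem SmF.dy {f : ℝ → ℝ → ℝ → ℝ} (h : SmF f) (t x y : ℝ) :
    HasDerivAt (fun s => f t x s) (py f t x y) y :=
  (h.dy0 t x y).differentiableAt.hasDerivAt

theorem SmF.smfd {f : ℝ → ℝ → ℝ → ℝ} (h : SmF f) :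
    ContDiff ℝ (⊤ : ℕ∞) (fderiv ℝ (fun q : ℝ × ℝ × ℝ => f q.1 q.2.1 q.2.2)) :=
  ContDiff.fderiv_right (m := (⊤ : ℕ∞)) h (by simp)

theorem SmF.pt_eq {f : ℝ → ℝ → ℝ → ℝ} (h : SmF f) :
    (fun q : ℝ × ℝ × ℝ => pt f q.1 q.2.1 q.2.2) = fun q =>
      fderiv ℝ (fun q : ℝ × ℝ × ℝ => f q.1 q.2.1 q.2.2) q (1, 0, 0) :=
  funext fun q => (h.dt0 q.1 q.2.1 q.2.2).deriv

theorem SmF.px_eq {f : ℝ → ℝ → ℝ → ℝ} (h : SmF f) :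
    (fun q : ℝ × ℝ × ℝ => px f q.1 q.2.1 q.2.2) = fun q =>
      fderiv ℝ (fun q : ℝ × ℝ × ℝ => f q.1 q.2.1 q.2.2) q (0, 1, 0) :=
  funext fun q => (h.dx0 q.1 q.2.1 q.2.2).deriv

theorem SmF.py_eq {f : ℝ → ℝ → ℝ → ℝ} (h : SmF f) :
    (fun q : ℝ × ℝ × ℝ => py f q.1 q.2.1 q.2.2) = fun q =>
      fderiv ℝ (fun q : ℝ × ℝ × ℝ => f q.1 q.2.1 q.2.2) q (0, 0, 1) :=
  funext fun q => (h.dy0 q.1 q.2.1 q.2.2).deriv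

theorem SmF.pt {f : ℝ → ℝ → ℝ → ℝ} (h : SmF f) : SmF (pt f) := by
  unfold SmF
  rw [h.pt_eq]
  exact h.smfd.clm_apply contDiff_const

theorem SmF.px {f : ℝ → ℝ → ℝ → ℝ} (h : SmF f) : SmF (px f) := by
  unfold SmF
  rw [h.px_eq]
  exact h.smfd.clm_apply contDiff_const

theorem SmF.py {f : ℝ → ℝ → ℝ → ℝ} (h : SmF f) : SmF (py f) := by
  unfold SmF
  rw [h.py_eq]
  exact h.smfd.clm_apply contDiff_const

theorem SmF.snd {f : ℝ → ℝ → ℝ → ℝ} (h : SmF f) (q a b : ℝ × ℝ × ℝ) :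
    fderiv ℝ (fun p => fderiv ℝ (fun q : ℝ × ℝ × ℝ => f q.1 q.2.1 q.2.2) p a) q b
    = fderiv ℝ (fun p => fderiv ℝ (fun q : ℝ × ℝ × ℝ => f q.1 q.2.1 q.2.2) p b) q a := by
  have hd := ((h.smfd.differentiable (by simp)) q).hasFDerivAt
  have e : ∀ a : ℝ × ℝ × ℝ, HasFDerivAt
      (fun p => fderiv ℝ (fun q : ℝ × ℝ × ℝ => f q.1 q.2.1 q.2.2) p a) _ q :=
    fun a => hd.clm_apply (hasFDerivAt_const a q)
  rw [(e a).fderiv, (e b).fderiv]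
  simpa using second_derivative_symmetric h.fd hd b a

theorem SmF.tx {f : ℝ → ℝ → ℝ → ℝ} (h : SmF f) : _root_.pt (_root_.px f) = _root_.px (_root_.pt f) := by
  funext t x y
  refine (h.px.dt0 t x y).deriv.trans (Eq.trans ?_ (h.pt.dx0 t x y).deriv.symm)
  rw [h.px_eq, h.pt_eq]
  exact h.snd _ _ _

theorem SmF.ty {f : ℝ → ℝ → ℝ → ℝ} (h : SmF f) : _root_.pt (_root_.py f) = _root_.py (_root_.pt f) := by
  funext t x y
  refine (h.py.dt0 t x y).deriv.trans (Eq.trans ?_ (h.pt.dy0 t x y).deriv.symm)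
  rw [h.py_eq, h.pt_eq]
  exact h.snd _ _ _

/-- Energy conservation law for the potential Kawahara–KP equation. -/
theorem energy_conservation_KKP (β σ : ℝ) (hβ : β ≠ 0) (hσ : σ = 1 ∨ σ = -1)
    (v : ℝ → ℝ → ℝ → ℝ)
    (hv : ContDiff ℝ (⊤ : ℕ∞) (fun q : ℝ × ℝ × ℝ => v q.1 q.2.1 q.2.2))
    (hsol : ∀ t x y : ℝ, KKP β σ v t x y = 0)
    (T Φx Φy : ℝ → ℝ → ℝ → ℝ)
    (hT : T = fun t x y =>
      (1 / 2) * ((px (px (px v)) t x y) ^ 2 - β * (px (px v) t x y) ^ 2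
        + (1 / 3) * (px v t x y) ^ 3 - σ * (py v t x y) ^ 2))
    (hΦx : Φx = fun t x y =>
      (β * px (px v) t x y + px (px (px (px v))) t x y) * px (pt v) t x y
        - (1 / 2) * (pt v t x y) ^ 2
        - (β * px (px (px v)) t x y + px (px (px (px (px v)))) t x y
            + (1 / 2) * (px v t x y) ^ 2) * pt v t x y
        - px (px (pt v)) t x y * px (px (px v)) t x y)
    (hΦy : Φy = fun t x y => σ * pt v t x y * py v t x y) :
    ∀ t x y : ℝ, pt T t x y + px Φx t x y + py Φy t x y = 0 := by
  intro t x y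
  have h : SmF v := hv
  have a1 := h.px.dt t x y
  have a2 := h.px.px.dt t x y
  have a3 := h.px.px.px.dt t x y
  have ay := h.py.dt t x y
  rw [h.tx] at a1
  rw [h.px.tx, h.tx] at a2
  rw [h.px.px.tx, h.px.tx, h.tx] at a3
  rw [h.ty] at ay
  have b1 := h.px.dx t x y
  have b2 := h.px.px.dx t x y
  have b3 := h.px.px.px.dx t x y
  have b4 := h.px.px.px.px.dx t x y
  have b5 := h.px.px.px.px.px.dx t x y
  have c0 := h.pt.dx t x y
  have c1 := h.pt.px.dx t x y
  have c2 := h.pt.px.px.dx t x y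
  have d1 := h.pt.dy t x y
  have d2 := h.py.dy t x y
  have eT := (((((a3.pow 2).sub ((a2.pow 2).const_mul β)).add
    ((a1.pow 3).const_mul (1 / 3))).sub ((ay.pow 2).const_mul σ)).const_mul (1 / 2)).deriv
  have eX := ((((((b2.const_mul β).add b4).mul c1).sub ((c0.pow 2).const_mul (1 / 2))).sub
    ((((b3.const_mul β).add b5).add ((b1.pow 2).const_mul (1 / 2))).mul c0)).sub
    (c2.mul b3)).deriv
  have eY := ((d1.const_mul σ).mul d2).deriv
  subst hT hΦx hΦy
  refine (congrArg₂ (· + ·) (congrArg₂ (· + ·) eT eX) eY).trans ?_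
  have hs := hsol t x y
  unfold KKP at hs
  simp only [Pi.add_apply, Pi.sub_apply, Pi.mul_apply, Pi.pow_apply]
  push_cast
  linear_combination (-(pt v t x y)) * hs
end

section
/- The potential Kawahara–KP equation is the Euler–Lagrange equation of the Lagrangian L: for every smooth function v : ℝ³ → ℝ and every smooth compactly supported function φ : ℝ³ → ℝ, the derivative at ε = 0 of the function ε ↦ ∫_{ℝ³} ( L[v + ε·φ] - L[v] ) dt dx dy equals ∫_{ℝ³} ( v_tx + v_x·v_xx + β·v_xxxx + v_xxxxxx - σ·v_yy )·φ dt dx dy, where for a smooth function w the Lagrangian density is L[w] := -(1/2)·w_t·w_x - (1/6)·w_x³ + (1/2)·β·w_xx² - (1/2)·w_xxx² + (1/2)·σ·w_y². -/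
/-- The Lagrangian density
`L[w] = -(1/2)·w_t·w_x - (1/6)·w_x³ + (1/2)·β·w_xx² - (1/2)·w_xxx² + (1/2)·σ·w_y²`. -/
noncomputable def Lag (β σ : ℝ) (w : ℝ → ℝ → ℝ → ℝ) : ℝ → ℝ → ℝ → ℝ :=
  fun t x y =>
    - (1 / 2) * pt w t x y * px w t x y - (1 / 6) * (px w t x y) ^ 3
      + (1 / 2) * β * (px (px w) t x y) ^ 2
      - (1 / 2) * (px (px (px w)) t x y) ^ 2
      + (1 / 2) * σ * (py w t x y) ^ 2

open MeasureTheory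

def UU (v : ℝ → ℝ → ℝ → ℝ) : ℝ × ℝ × ℝ → ℝ := fun q => v q.1 q.2.1 q.2.2

def Sm (v : ℝ → ℝ → ℝ → ℝ) : Prop := ContDiff ℝ (⊤ : ℕ∞) (UU v)

lemma Sm.diff {v} (h : Sm v) : Differentiable ℝ (UU v) := ContDiff.differentiable h (by simp)

lemma Sm.hx {v} (h : Sm v) (t x y : ℝ) :
    HasDerivAt (fun s => v t s y) (fderiv ℝ (UU v) (t, x, y) (0, 1, 0)) x := by
  have h1 : HasDerivAt (fun s : ℝ => ((t, s, y) : ℝ × ℝ × ℝ)) (0, 1, 0) x :=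
    (hasDerivAt_const x t).prodMk ((hasDerivAt_id x).prodMk (hasDerivAt_const x y))
  exact (h.diff (t, x, y)).hasFDerivAt.comp_hasDerivAt x h1

lemma Sm.ht {v} (h : Sm v) (t x y : ℝ) :
    HasDerivAt (fun s => v s x y) (fderiv ℝ (UU v) (t, x, y) (1, 0, 0)) t := by
  have h1 : HasDerivAt (fun s : ℝ => ((s, x, y) : ℝ × ℝ × ℝ)) (1, 0, 0) t :=
    (hasDerivAt_id t).prodMk ((hasDerivAt_const t x).prodMk (hasDerivAt_const t y))
  exact (h.diff (t, x, y)).hasFDerivAt.comp_hasDerivAt t h1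

lemma Sm.hy {v} (h : Sm v) (t x y : ℝ) :
    HasDerivAt (fun s => v t x s) (fderiv ℝ (UU v) (t, x, y) (0, 0, 1)) y := by
  have h1 : HasDerivAt (fun s : ℝ => ((t, x, s) : ℝ × ℝ × ℝ)) (0, 0, 1) y :=
    (hasDerivAt_const y t).prodMk ((hasDerivAt_const y x).prodMk (hasDerivAt_id y))
  exact (h.diff (t, x, y)).hasFDerivAt.comp_hasDerivAt y h1

lemma Sm.ux {v} (h : Sm v) : UU (px v) = fun q => fderiv ℝ (UU v) q (0, 1, 0) :=
  funext fun q => (h.hx q.1 q.2.1 q.2.2).deriv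
lemma Sm.ut {v} (h : Sm v) : UU (pt v) = fun q => fderiv ℝ (UU v) q (1, 0, 0) :=
  funext fun q => (h.ht q.1 q.2.1 q.2.2).deriv
lemma Sm.uy {v} (h : Sm v) : UU (py v) = fun q => fderiv ℝ (UU v) q (0, 0, 1) :=
  funext fun q => (h.hy q.1 q.2.1 q.2.2).deriv

lemma Sm.fd {v} (h : Sm v) (e : ℝ × ℝ × ℝ) :
    ContDiff ℝ (⊤ : ℕ∞) (fun q => fderiv ℝ (UU v) q e) :=
  (ContDiff.fderiv_right (m := (⊤ : ℕ∞)) h (by simp)).clm_apply contDiff_const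

lemma Sm.x {v} (h : Sm v) : Sm (px v) := by unfold Sm; rw [h.ux]; exact h.fd _
lemma Sm.t {v} (h : Sm v) : Sm (pt v) := by unfold Sm; rw [h.ut]; exact h.fd _
lemma Sm.y {v} (h : Sm v) : Sm (py v) := by unfold Sm; rw [h.uy]; exact h.fd _

lemma Sm.cx {v} (h : Sm v) (c : HasCompactSupport (UU v)) : HasCompactSupport (UU (px v)) := by
  rw [h.ux]; exact c.fderiv_apply ℝ _
lemma Sm.ct {v} (h : Sm v) (c : HasCompactSupport (UU v)) : HasCompactSupport (UU (pt v)) := by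
  rw [h.ut]; exact c.fderiv_apply ℝ _
lemma Sm.cy {v} (h : Sm v) (c : HasCompactSupport (UU v)) : HasCompactSupport (UU (py v)) := by
  rw [h.uy]; exact c.fderiv_apply ℝ _

lemma Sm.cont {v} (h : Sm v) : Continuous (UU v) := ContDiff.continuous h

lemma Sm.comm {v} (h : Sm v) : UU (pt (px v)) = UU (px (pt v)) := by
  rw [h.x.ut, h.t.ux, h.ux, h.ut]
  funext q
  have hd : DifferentiableAt ℝ (fderiv ℝ (UU v)) q :=
    (ContDiff.fderiv_right (m := (⊤ : ℕ∞)) h (by simp)).differentiable (by simp) q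
  rw [fderiv_clm_apply hd (differentiableAt_const _), fderiv_clm_apply hd (differentiableAt_const _)]
  have hs : IsSymmSndFDerivAt ℝ (UU v) q :=
    (ContDiff.contDiffAt h).isSymmSndFDerivAt (by
      simp only [minSmoothness_of_isRCLikeNormedField]; exact WithTop.coe_le_coe.2 (le_top : (2 : ℕ∞) ≤ ⊤))
  simpa using hs.eq (1, 0, 0) (0, 1, 0)

lemma px_lin {v φ} (hv : Sm v) (hφ : Sm φ) (ε : ℝ) :
    px (fun t x y => v t x y + ε * φ t x y) = fun t x y => px v t x y + ε * px φ t x y := by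
  funext t x y
  have a := hv.hx t x y
  have b := hφ.hx t x y
  simp only [px]
  rw [a.deriv, b.deriv]
  exact (a.add (b.const_mul ε)).deriv
lemma pt_lin {v φ} (hv : Sm v) (hφ : Sm φ) (ε : ℝ) :
    pt (fun t x y => v t x y + ε * φ t x y) = fun t x y => pt v t x y + ε * pt φ t x y := by
  funext t x y
  have a := hv.ht t x y
  have b := hφ.ht t x y
  simp only [pt]
  rw [a.deriv, b.deriv]
  exact (a.add (b.const_mul ε)).deriv
lemma py_lin {v φ} (hv : Sm v) (hφ : Sm φ) (ε : ℝ) :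
    py (fun t x y => v t x y + ε * φ t x y) = fun t x y => py v t x y + ε * py φ t x y := by
  funext t x y
  have a := hv.hy t x y
  have b := hφ.hy t x y
  simp only [py]
  rw [a.deriv, b.deriv]
  exact (a.add (b.const_mul ε)).deriv

def ZZ (f : ℝ × ℝ × ℝ → ℝ) : Prop := Integrable f ∧ ∫ q, f q = 0

lemma ZZ.add {f g} (hf : ZZ f) (hg : ZZ g) : ZZ (fun q => f q + g q) :=
  ⟨hf.1.add hg.1, by rw [integral_add hf.1 hg.1, hf.2, hg.2, add_zero]⟩
lemma ZZ.mul {f} (hf : ZZ f) (c : ℝ) : ZZ (fun q => c * f q) :=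
  ⟨hf.1.const_mul c, by rw [integral_const_mul, hf.2, mul_zero]⟩

lemma ci {f g : ℝ × ℝ × ℝ → ℝ} (hf : Continuous f) (hg : Continuous g)
    (c : HasCompactSupport g) : Integrable (fun q => f q * g q) :=
  (hf.mul hg).integrable_of_hasCompactSupport c.mul_left

lemma ibp {f g : ℝ × ℝ × ℝ → ℝ} (hf : ContDiff ℝ (⊤ : ℕ∞) f) (hg : ContDiff ℝ (⊤ : ℕ∞) g)
    (c : HasCompactSupport g) (e : ℝ × ℝ × ℝ) :
    ZZ (fun q => f q * fderiv ℝ g q e + fderiv ℝ f q e * g q) := by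
  have cf : Continuous (fun q => fderiv ℝ f q e) := (Sm.fd (v := fun t x y => f (t, x, y)) hf e).continuous
  have cg : Continuous (fun q => fderiv ℝ g q e) := (Sm.fd (v := fun t x y => g (t, x, y)) hg e).continuous
  have i1 := ci hf.continuous cg (c.fderiv_apply ℝ e)
  have i2 := ci cf hg.continuous c
  have i3 := ci hf.continuous hg.continuous c
  refine ⟨i1.add i2, ?_⟩
  have m2 : (volume : Measure (ℝ × ℝ)).IsAddHaarMeasure :=
    inferInstanceAs (((volume : Measure ℝ).prod (volume : Measure ℝ)).IsAddHaarMeasure)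
  have m3 : (volume : Measure (ℝ × ℝ × ℝ)).IsAddHaarMeasure :=
    inferInstanceAs (((volume : Measure ℝ).prod (volume : Measure (ℝ × ℝ))).IsAddHaarMeasure)
  rw [integral_add i1 i2, integral_mul_fderiv_eq_neg_fderiv_mul_of_integrable i2 i1 i3
    (fun x _ => hf.differentiable (by simp) x) (fun x _ => hg.differentiable (by simp) x)]
  simp

lemma ibx {f g} (hf : Sm f) (hg : Sm g) (c : HasCompactSupport (UU g)) :
    ZZ (fun q => UU f q * UU (px g) q + UU (px f) q * UU g q) := by
  rw [hf.ux, hg.ux]; exact ibp hf hg c _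
lemma ibt {f g} (hf : Sm f) (hg : Sm g) (c : HasCompactSupport (UU g)) :
    ZZ (fun q => UU f q * UU (pt g) q + UU (pt f) q * UU g q) := by
  rw [hf.ut, hg.ut]; exact ibp hf hg c _
lemma iby {f g} (hf : Sm f) (hg : Sm g) (c : HasCompactSupport (UU g)) :
    ZZ (fun q => UU f q * UU (py g) q + UU (py f) q * UU g q) := by
  rw [hf.uy, hg.uy]; exact ibp hf hg c _



/-- The potential Kawahara–KP equation is the Euler–Lagrange equation of the
Lagrangian `Lag`: the first variation of `∫ (L[v+εφ] - L[v])` at `ε = 0` equals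
`∫ (v_tx + v_x·v_xx + β·v_xxxx + v_xxxxxx - σ·v_yy)·φ`. -/
theorem euler_lagrange_KKP (β σ : ℝ) (hβ : β ≠ 0) (hσ : σ = 1 ∨ σ = -1)
    (v φ : ℝ → ℝ → ℝ → ℝ)
    (hv : ContDiff ℝ (⊤ : ℕ∞) (fun q : ℝ × ℝ × ℝ => v q.1 q.2.1 q.2.2))
    (hφ : ContDiff ℝ (⊤ : ℕ∞) (fun q : ℝ × ℝ × ℝ => φ q.1 q.2.1 q.2.2))
    (hφc : HasCompactSupport (fun q : ℝ × ℝ × ℝ => φ q.1 q.2.1 q.2.2)) :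
    HasDerivAt
      (fun ε : ℝ =>
        ∫ q : ℝ × ℝ × ℝ,
          (Lag β σ (fun t x y => v t x y + ε * φ t x y) q.1 q.2.1 q.2.2
            - Lag β σ v q.1 q.2.1 q.2.2))
      (∫ q : ℝ × ℝ × ℝ, KKP β σ v q.1 q.2.1 q.2.2 * φ q.1 q.2.1 q.2.2)
      0 := by
  have hv' : Sm v := hv
  have hφ' : Sm φ := hφ
  have c0 : HasCompactSupport (UU φ) := hφc
  have c1 := hφ'.cx c0
  have c2 := hφ'.x.cx c1
  have c3 := hφ'.x.x.cx c2
  have ct := hφ'.ct c0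
  have cy := hφ'.cy c0
  have k0 := hφ'.cont
  have k1 := hφ'.x.cont
  have k2 := hφ'.x.x.cont
  have k3 := hφ'.x.x.x.cont
  have kt := hφ'.t.cont
  have ky := hφ'.y.cont
  have v1 := hv'.x.cont
  have v2 := hv'.x.x.cont
  have v3 := hv'.x.x.x.cont
  have v4 := hv'.x.x.x.x.cont
  have v6 := hv'.x.x.x.x.x.x.cont
  have vt := hv'.t.cont
  have vtx := hv'.t.x.cont
  have vy := hv'.y.cont
  have vyy := hv'.y.y.cont
  have hsq : Sm (fun t x y => px v t x y * px v t x y) := ContDiff.mul hv'.x hv'.x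
  have hpsq : px (fun t x y => px v t x y * px v t x y)
      = fun t x y => 2 * px v t x y * px (px v) t x y := by
    funext t x y
    have a := hv'.x.hx t x y
    have e : px (px v) t x y = _ := a.deriv
    rw [e]
    refine (a.mul a).deriv.trans ?_
    ring
  -- the coefficients
  let K : ℝ × ℝ × ℝ → ℝ := fun q => KKP β σ v q.1 q.2.1 q.2.2 * φ q.1 q.2.1 q.2.2
  let A : ℝ × ℝ × ℝ → ℝ := fun q =>
    (-(1/2) * UU (pt v) q - 1/2 * UU (px v) q ^ 2) * UU (px φ) q
      + (-(1/2) * UU (px v) q) * UU (pt φ) q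
      + (β * UU (px (px v)) q) * UU (px (px φ)) q
      + (- UU (px (px (px v))) q) * UU (px (px (px φ))) q
      + (σ * UU (py v) q) * UU (py φ) q
  let B : ℝ × ℝ × ℝ → ℝ := fun q =>
    (-(1/2) * UU (pt φ) q - 1/2 * UU (px v) q * UU (px φ) q) * UU (px φ) q
      + (1/2 * β * UU (px (px φ)) q) * UU (px (px φ)) q
      + (-(1/2) * UU (px (px (px φ))) q) * UU (px (px (px φ))) q
      + (1/2 * σ * UU (py φ) q) * UU (py φ) q
  let C : ℝ × ℝ × ℝ → ℝ := fun q => (-(1/6) * UU (px φ) q ^ 2) * UU (px φ) q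
  have iA : Integrable A := by
    refine ((((ci ?_ k1 c1).add (ci ?_ kt ct)).add (ci ?_ k2 c2)).add (ci ?_ k3 c3)).add
      (ci ?_ ky cy) <;> fun_prop
  have iB : Integrable B := by
    refine (((ci ?_ k1 c1).add (ci ?_ k2 c2)).add (ci ?_ k3 c3)).add
      (ci ?_ ky cy) <;> fun_prop
  have iC : Integrable C := by
    refine ci ?_ k1 c1; fun_prop
  have iK : Integrable K := by
    refine ci (f := fun q => UU (px (pt v)) q + UU (px v) q * UU (px (px v)) q
      + β * UU (px (px (px (px v)))) q
      + UU (px (px (px (px (px (px v)))))) q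
      - σ * UU (py (py v)) q) ?_ k0 c0
    fun_prop
  have hAK : ∫ q, A q = ∫ q, K q := by
    have z1 := ibx hv'.t hφ' c0
    have z2 := ibt hv'.x hφ' c0
    have z3 := ibx hsq hφ' c0
    have z4 := ibx hv'.x.x hφ'.x c1
    have z5 := ibx hv'.x.x.x hφ' c0
    have z6 := ibx hv'.x.x.x hφ'.x.x c2
    have z7 := ibx hv'.x.x.x.x hφ'.x c1
    have z8 := ibx hv'.x.x.x.x.x hφ' c0
    have z9 := iby hv'.y hφ' c0
    rw [hv'.comm] at z2
    rw [hpsq] at z3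
    have Z := (((((((((z1.mul (-(1/2))).add (z2.mul (-(1/2)))).add (z3.mul (-(1/2)))).add
      (z4.mul β)).add (z5.mul (-β))).add (z6.mul (-1))).add (z7.mul 1)).add (z8.mul (-1))).add
      (z9.mul σ)).2
    rw [← sub_eq_zero, ← integral_sub iA iK, ← Z]
    congr 1
    funext q
    simp only [A, K, UU, KKP]
    ring
  have hF : (fun ε : ℝ =>
        ∫ q : ℝ × ℝ × ℝ,
          (Lag β σ (fun t x y => v t x y + ε * φ t x y) q.1 q.2.1 q.2.2
            - Lag β σ v q.1 q.2.1 q.2.2))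
      = fun ε : ℝ => ε * (∫ q, A q) + ε ^ 2 * (∫ q, B q) + ε ^ 3 * (∫ q, C q) := by
    funext ε
    rw [← integral_const_mul, ← integral_const_mul, ← integral_const_mul,
      ← integral_add (iA.const_mul _) (iB.const_mul _),
      ← integral_add (f := fun q => ε * A q + ε ^ 2 * B q)
        ((iA.const_mul _).add (iB.const_mul _)) (iC.const_mul _)]
    congr 1
    funext q
    simp only [Lag]
    rw [px_lin hv' hφ', pt_lin hv' hφ', py_lin hv' hφ', px_lin hv'.x hφ'.x,
      px_lin hv'.x.x hφ'.x.x]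
    simp only [A, B, C, UU]
    ring
  rw [hF]
  change HasDerivAt _ (∫ q, K q) 0
  rw [← hAK]
  have h1 := ((hasDerivAt_id (0:ℝ)).mul_const (∫ q, A q)).add
    (((hasDerivAt_pow 2 (0:ℝ)).mul_const (∫ q, B q)))
  have h2 := h1.add ((hasDerivAt_pow 3 (0:ℝ)).mul_const (∫ q, C q))
  refine h2.congr_deriv ?_
  simp
end
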